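/- Let D be a strongly connected digraph of order n ≥ 3 and let z_0 be some vertex of D such that d(x) + d(y) ≥ 2n − 1 for any two nonadjacent vertices x, y ∈ V(D) ∖ {z_0}. Then D has a directed cycle that contains all the vertices of D except possibly z_0. -/

import Mathlib

/-!
Basic definitions for finite digraphs (no loops, no multiple arcs), where the arc
relation is `A : V → V → Prop`.  Paths and cycles are given as lists of (distinct)
vertices.
-/

variable {V : Type*}

/-- A (directed) path, given by the list of its vertices. -/
def IsPathOn (A : V → V → Prop) (l : List V) : Prop :=
  l ≠ [] ∧ l.Nodup ∧ l.Chain' A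

/-- A (directed) cycle, given by the list of its vertices; its length (number of
arcs) equals the length of the list. -/
def IsCycleOn (A : V → V → Prop) (l : List V) : Prop :=
  2 ≤ l.length ∧ l.Nodup ∧ l.Chain' A ∧
    ∀ a ∈ l.getLast?, ∀ b ∈ l.head?, A a b

/-- A directed path from `a` to `b`. -/
def IsPathFromTo (A : V → V → Prop) (l : List V) (a b : V) : Prop :=
  IsPathOn A l ∧ l.head? = some a ∧ l.getLast? = some b

/-- Out-degree `d⁺(x)`. -/
noncomputable def outDeg (A : V → V → Prop) (x : V) : ℕ := {y | A x y}.ncard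

/-- In-degree `d⁻(x)`. -/
noncomputable def inDeg (A : V → V → Prop) (x : V) : ℕ := {y | A y x}.ncard

/-- Degree `d(x) = d⁺(x) + d⁻(x)`. -/
noncomputable def deg (A : V → V → Prop) (x : V) : ℕ := outDeg A x + inDeg A x

/-- Out-degree into a set, `d⁺(x, S)`. -/
noncomputable def outDegOn (A : V → V → Prop) (x : V) (S : Set V) : ℕ :=
  {y ∈ S | A x y}.ncard

/-- In-degree from a set, `d⁻(x, S)`. -/
noncomputable def inDegOn (A : V → V → Prop) (x : V) (S : Set V) : ℕ :=
  {y ∈ S | A y x}.ncard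

/-- Degree with respect to a set, `d(x, S) = d⁺(x, S) + d⁻(x, S)`. -/
noncomputable def degOn (A : V → V → Prop) (x : V) (S : Set V) : ℕ :=
  outDegOn A x S + inDegOn A x S

/-- Two distinct vertices are adjacent if there is an arc between them in some
direction. -/
def DAdj (A : V → V → Prop) (x y : V) : Prop := A x y ∨ A y x

/-- `D` is `S`-strongly connected: between any two distinct vertices of `S` there
are directed paths in both directions. -/
def SetStronglyConnected (A : V → V → Prop) (S : Set V) : Prop :=
  ∀ x ∈ S, ∀ y ∈ S, x ≠ y → ∃ l, IsPathFromTo A l x y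

/-- Strong connectivity. -/
def StronglyConnected (A : V → V → Prop) : Prop :=
  ∀ x y : V, x ≠ y → ∃ l, IsPathFromTo A l x y

/-- 2-strong connectivity: at least 3 vertices, and deleting any vertex leaves a
strongly connected digraph. -/
def TwoStronglyConnected [Fintype V] (A : V → V → Prop) : Prop :=
  3 ≤ Fintype.card V ∧
    ∀ w x y : V, x ≠ w → y ≠ w → x ≠ y → ∃ l, IsPathFromTo A l x y ∧ w ∉ l

/-- Condition `A₀` for a set `Y` of vertices. -/
def CondA0 [Fintype V] (A : V → V → Prop) (Y : Set V) : Prop :=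
  ∀ x ∈ Y, ∀ y ∈ Y, ∀ z ∈ Y,
    x ≠ y → x ≠ z → y ≠ z → ¬ DAdj A x y →
      (¬ A x z →
        deg A x + deg A y + outDeg A x + inDeg A z ≥ 3 * Fintype.card V - 2) ∧
      (¬ A z x →
        deg A x + deg A y + inDeg A x + outDeg A z ≥ 3 * Fintype.card V - 2)

/-- A `C`-bypass: a path of length at least two whose end-vertices lie on the
cycle `c` and whose internal vertices avoid `c`. -/
def IsBypass (A : V → V → Prop) (c p : List V) : Prop :=
  IsPathOn A p ∧ 3 ≤ p.length ∧
    (∀ a ∈ p.head?, a ∈ c) ∧ (∀ b ∈ p.getLast?, b ∈ c) ∧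
    ∀ v ∈ p.tail.dropLast, v ∉ c

/-- The vertex `y` can be inserted into the path `p`. -/
def CanInsert (A : V → V → Prop) (p : List V) (y : V) : Prop :=
  ∃ i, ∃ h : i + 1 < p.length, A (p[i]'(Nat.lt_of_succ_lt h)) y ∧ A y (p[i+1]'h)

/-- A `(C, x)`-path: a path from a vertex `u` of the cycle `c` to `x`, meeting `c`
only in `u`. -/
def IsCtoXPath (A : V → V → Prop) (c l : List V) (u x : V) : Prop :=
  IsPathFromTo A l u x ∧ u ∈ c ∧ ∀ v ∈ l, v ∈ c → v = u

/-- An `(x, C)`-path: a path from `x` to a vertex `v` of the cycle `c`, meeting `c`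
only in `v`. -/
def IsXtoCPath (A : V → V → Prop) (c l : List V) (x v : V) : Prop :=
  IsPathFromTo A l x v ∧ v ∈ c ∧ ∀ w ∈ l, w ∈ c → w = v

/-! ### Counting arcs -/

open Classical in
/-- The number of arcs between `x` and `z`. -/
noncomputable def arcCount (A : V → V → Prop) (x z : V) : ℕ :=
  (if A x z then 1 else 0) + (if A z x then 1 else 0)

theorem arcCount_le_two (A : V → V → Prop) (x z : V) : arcCount A x z ≤ 2 := by
  unfold arcCount; split_ifs <;> omega

theorem arcCount_eq_zero {A : V → V → Prop} {x z : V} (h : ¬ DAdj A x z) :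
    arcCount A x z = 0 := by
  unfold DAdj at h; unfold arcCount; split_ifs <;> simp_all

theorem arcCount_add_arcCount_le_two {A : V → V → Prop} {u y r : V} (h₁ : ¬ (A u r ∧ A r y))
    (h₂ : ¬ (A y r ∧ A r u)) : arcCount A u r + arcCount A y r ≤ 2 := by
  unfold arcCount
  by_cases A u r <;> by_cases A r u <;> by_cases A y r <;> by_cases A r y <;> simp_all

theorem arcCount_add_arcCount_le_three {A : V → V → Prop} {u y r : V}
    (h : ¬ (A u r ∧ A r y) ∨ ¬ (A y r ∧ A r u)) : arcCount A u r + arcCount A y r ≤ 3 := by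
  unfold arcCount
  by_cases A u r <;> by_cases A r u <;> by_cases A y r <;> by_cases A r y <;> simp_all

theorem arcCount_self {A : V → V → Prop} (hA : ∀ v, ¬ A v v) (x : V) : arcCount A x x = 0 := by
  simp [arcCount, hA]

theorem deg_eq_sum_arcCount [Fintype V] (A : V → V → Prop) (x : V) :
    deg A x = ∑ z, arcCount A x z := by
  classical
  simp [deg, outDeg, inDeg, arcCount, Finset.sum_add_distrib, Set.ncard_eq_toFinset_card']

theorem DAdj.symm {A : V → V → Prop} {x y : V} (h : DAdj A x y) : DAdj A y x := Or.symm h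

/-- The vertex `u` fits into no arc of the list `l`. -/
def NotInsertable (A : V → V → Prop) (u : V) (l : List V) : Prop :=
  l.IsChain fun x y => ¬ (A x u ∧ A u y)

/-- Every arc from the last vertex of `l` to the first vertex of `m` is present. -/
def Link (A : V → V → Prop) (l m : List V) : Prop :=
  ∀ a ∈ l.getLast?, ∀ b ∈ m.head?, A a b

open Classical in
theorem sum_arcCount_add_one_le {A : V → V → Prop} {u : V} {l : List V} (hne : l ≠ [])
    (h : NotInsertable A u l) :
    (l.map (arcCount A u)).sum + 1 ≤
      l.length + (if Link A [u] l then 1 else 0) + (if Link A l [u] then 1 else 0) := by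
  induction l with
  | nil => exact absurd rfl hne
  | cons x l ih =>
    cases l with
    | nil => simp [arcCount, Link]
    | cons y l =>
      unfold NotInsertable at h
      rw [List.isChain_cons_cons] at h
      have := ih (by simp) h.2
      have h1 := h.1
      simp only [List.map_cons, List.sum_cons, List.length_cons, Link, List.getLast?_cons_cons,
        List.head?_cons, List.getLast?_singleton, Option.mem_def, Option.some.injEq,
        forall_eq'] at this ⊢
      have h2 : arcCount A u x + (if A u y then 1 else 0) ≤ 1 + (if A u x then 1 else 0) := by
        unfold arcCount
        by_cases A u x <;> by_cases A x u <;> by_cases A u y <;> simp_all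
      linarith

theorem deg_add_deg_le [Fintype V] {A : V → V → Prop} (hA : ∀ v, ¬ A v v) {z₀ u y : V}
    {P P' G : List V} (hnd : (P ++ G).Nodup) (hP : P ≠ []) (hu : u ∈ G) (hy : y ∉ P ++ G)
    (hyG : ∀ g ∈ G, ¬ DAdj A y g) (hnd' : P'.Nodup) (hPP' : P ⊆ P') (hP'C : P' ⊆ P ++ G)
    (hu' : u ∉ P') (hiu : NotInsertable A u P') (hiy : NotInsertable A y P)
    (hR : ∀ r ∉ P ++ G, r ≠ y → (r = z₀ → Link A P [y] → Link A [y] P →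
      ¬ (A u r ∧ A r y) ∧ ¬ (A y r ∧ A r u)) ∧ (r = z₀ → ¬ (A u r ∧ A r y) ∨ ¬ (A y r ∧ A r u)) ∧
      (r ≠ z₀ → ¬ (A u r ∧ A r y) ∧ ¬ (A y r ∧ A r u))) :
    deg A u + deg A y + 2 ≤ 2 * Fintype.card V := by
  classical
  have huy : ¬ DAdj A u y := fun h => hyG u hu h.symm
  set C := (P ++ G).toFinset with hC
  have hne' : P' ≠ [] := fun h => hP (List.subset_nil.mp (h ▸ hPP'))
  have hsub : P'.toFinset ⊆ C := fun x hx => by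
    rw [hC, List.mem_toFinset]; exact hP'C (List.mem_toFinset.mp hx)
  have hyC : ∑ z ∈ C, arcCount A y z = (P.map (arcCount A y)).sum := by
    rw [hC, List.sum_toFinset _ hnd, List.map_append, List.sum_append]
    have : (G.map (arcCount A y)).sum = 0 := by
      rw [List.sum_eq_zero_iff]
      intro x hx
      obtain ⟨g, hg, rfl⟩ := List.mem_map.mp hx
      exact arcCount_eq_zero (hyG g hg)
    exact (congrArg _ this).trans (add_zero _)
  have hyP := sum_arcCount_add_one_le hP hiy
  have huP := sum_arcCount_add_one_le hne' hiu
  have hlen : P.length ≤ P'.length :=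
    (List.subperm_of_subset (List.nodup_append.mp hnd).1 hPP').length_le
  have hcard' : P'.toFinset.card = P'.length := List.toFinset_card_of_nodup hnd'
  have huC1 : ∑ z ∈ C, arcCount A u z
      = ∑ z ∈ C \ P'.toFinset, arcCount A u z + (P'.map (arcCount A u)).sum := by
    rw [← List.sum_toFinset _ hnd', Finset.sum_sdiff hsub]
  have huC2 : ∑ z ∈ C \ P'.toFinset, arcCount A u z + 2 ≤ 2 * (C \ P'.toFinset).card := by
    have huM : u ∈ C \ P'.toFinset := by simp [hC, hu, hu']
    have : ∑ z ∈ C \ P'.toFinset, (arcCount A u z + if z = u then 2 else 0)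
        ≤ ∑ z ∈ C \ P'.toFinset, 2 := by
      refine Finset.sum_le_sum fun z _ => ?_
      have := arcCount_le_two A u z
      split_ifs with h
      · subst h; simp [arcCount_self hA]
      · omega
    rw [Finset.sum_add_distrib, Finset.sum_ite_eq' _ u, if_pos huM] at this
    simpa [mul_comm] using this
  have hcard : (C \ P'.toFinset).card + P'.toFinset.card = C.card :=
    Finset.card_sdiff_add_card_eq_card hsub
  have hRsum : ∑ z ∈ Cᶜ, (arcCount A u z + arcCount A y z) + 2 ≤ 2 * Cᶜ.card +
      (if Link A P [y] ∧ Link A [y] P then 0 else 1) := by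
    have hyM : y ∈ Cᶜ := by rw [Finset.mem_compl, hC, List.mem_toFinset]; exact hy
    have : ∑ z ∈ Cᶜ, (arcCount A u z + arcCount A y z + if z = y then 2 else 0)
        ≤ ∑ z ∈ Cᶜ, (2 + if z = z₀ then (if Link A P [y] ∧ Link A [y] P then 0 else 1) else 0) := by
      refine Finset.sum_le_sum fun z hz => ?_
      rw [Finset.mem_compl, hC, List.mem_toFinset] at hz
      by_cases hzy : z = y
      · subst hzy; simp [arcCount_self hA, arcCount_eq_zero huy]
      · obtain ⟨h1, h2, h3⟩ := hR z hz hzy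
        rw [if_neg hzy]
        by_cases hz0 : z = z₀
        · rw [if_pos hz0]
          split_ifs with hl
          · exact arcCount_add_arcCount_le_two (h1 hz0 hl.1 hl.2).1 (h1 hz0 hl.1 hl.2).2
          · exact arcCount_add_arcCount_le_three (h2 hz0)
        · rw [if_neg hz0]
          exact arcCount_add_arcCount_le_two (h3 hz0).1 (h3 hz0).2
    simp only [Finset.sum_add_distrib, Finset.sum_ite_eq', if_pos hyM, Finset.sum_const,
      smul_eq_mul] at this ⊢
    split_ifs at this ⊢ <;> omega
  have htot : C.card + Cᶜ.card = Fintype.card V := Finset.card_add_card_compl C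
  rw [deg_eq_sum_arcCount, deg_eq_sum_arcCount, ← Finset.sum_add_sum_compl C,
    ← Finset.sum_add_sum_compl C (arcCount A y)]
  rw [Finset.sum_add_distrib] at hRsum
  have hlink : (if Link A [y] P then 1 else 0) + (if Link A P [y] then 1 else 0) +
      (if Link A P [y] ∧ Link A [y] P then 0 else 1) ≤ 2 := by
    by_cases h₁ : Link A P [y] <;> by_cases h₂ : Link A [y] P <;> simp [h₁, h₂]
  have hlink' : (if Link A [u] P' then 1 else 0) + (if Link A P' [u] then 1 else 0) ≤ 2 := by
    by_cases h₁ : Link A P' [u] <;> by_cases h₂ : Link A [u] P' <;> simp [h₁, h₂]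
  linarith

/-- If the only possible common neighbour of two nonadjacent vertices is `z₀`, then their degree
sum is small. -/
theorem deg_add_deg_le_of_common [Fintype V] {A : V → V → Prop} (hA : ∀ v, ¬ A v v) {z₀ u y : V}
    (hne : u ≠ y) (huy : ¬ DAdj A u y) (h : ∀ z, z ≠ z₀ → ¬ DAdj A u z ∨ ¬ DAdj A y z) :
    deg A u + deg A y + 2 ≤ 2 * Fintype.card V := by
  classical
  have : ∑ z, (arcCount A u z + arcCount A y z + (if z = u then 2 else 0)
      + (if z = y then 2 else 0)) ≤ ∑ z, (2 + if z = z₀ then 2 else 0) := by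
    refine Finset.sum_le_sum fun z _ => ?_
    by_cases hzu : z = u
    · subst hzu
      simp [arcCount_self hA, arcCount_eq_zero fun h => huy (DAdj.symm h), hne]
    by_cases hzy : z = y
    · subst hzy
      simp [arcCount_self hA, arcCount_eq_zero huy, hzu]
    have h1 := arcCount_le_two A u z
    have h2 := arcCount_le_two A y z
    rw [if_neg hzu, if_neg hzy]
    split_ifs with hz
    · omega
    · rcases h z hz with h | h <;> rw [arcCount_eq_zero h] <;> omega
  simp only [Finset.sum_add_distrib, Finset.sum_ite_eq', Finset.mem_univ, if_true,
    Finset.sum_const, smul_eq_mul, Finset.card_univ] at this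
  rw [deg_eq_sum_arcCount, deg_eq_sum_arcCount]
  omega

/-! ### Cycles and insertion -/

theorem link_append_left {A : V → V → Prop} {l m k : List V} (hm : m ≠ []) :
    Link A (l ++ m) k ↔ Link A m k := by
  simp [Link, List.getLast?_append, List.getLast?_eq_some_getLast hm]

theorem link_append_right {A : V → V → Prop} {l m k : List V} (hm : m ≠ []) :
    Link A k (m ++ l) ↔ Link A k m := by
  simp [Link, List.head?_append, List.head?_eq_some_head hm]

theorem isChain_append_iff_link {A : V → V → Prop} {l m : List V} :
    (l ++ m).IsChain A ↔ l.IsChain A ∧ m.IsChain A ∧ Link A l m :=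
  List.isChain_append

theorem isCycleOn_append {A : V → V → Prop} {l m : List V} (hl : l ≠ []) (hm : m ≠ []) :
    IsCycleOn A (l ++ m) ↔
      (l ++ m).Nodup ∧ l.IsChain A ∧ m.IsChain A ∧ Link A l m ∧ Link A m l := by
  have h2 : 2 ≤ (l ++ m).length := by
    have := List.length_pos_iff.mpr hl
    have := List.length_pos_iff.mpr hm
    rw [List.length_append]; omega
  have h3 : (∀ a ∈ (l ++ m).getLast?, ∀ b ∈ (l ++ m).head?, A a b) ↔ Link A m l :=
    (link_append_left hm).trans (link_append_right hl)
  unfold IsCycleOn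
  rw [h3]
  change _ ∧ _ ∧ List.IsChain A (l ++ m) ∧ _ ↔ _
  rw [isChain_append_iff_link]
  tauto

theorem IsCycleOn.rotate {A : V → V → Prop} {l m : List V} (h : IsCycleOn A (l ++ m)) :
    IsCycleOn A (m ++ l) := by
  rcases eq_or_ne l [] with rfl | hl
  · simpa using h
  rcases eq_or_ne m [] with rfl | hm
  · simpa using h
  rw [isCycleOn_append hl hm] at h
  rw [isCycleOn_append hm hl, List.nodup_append_comm]
  tauto

theorem isChain_insert {A : V → V → Prop} {l m : List V} {a b u : V}
    (h : (l ++ a :: b :: m).IsChain A) (hau : A a u) (hub : A u b) :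
    (l ++ a :: u :: b :: m).IsChain A := by
  rw [isChain_append_iff_link] at h ⊢
  rw [List.isChain_cons_cons] at h
  rw [List.isChain_cons_cons, List.isChain_cons_cons]
  exact ⟨h.1, ⟨hau, hub, h.2.1.2⟩, h.2.2⟩

theorem perm_insert {l m : List V} {a b u : V} :
    (l ++ a :: u :: b :: m).Perm (u :: (l ++ a :: b :: m)) := by
  simpa using List.perm_middle (l₁ := l ++ [a]) (a := u) (l₂ := b :: m)

theorem nodup_insert {l m : List V} {a b u : V} (h : (l ++ a :: b :: m).Nodup)
    (hu : u ∉ l ++ a :: b :: m) : (l ++ a :: u :: b :: m).Nodup :=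
  perm_insert.nodup_iff.mpr (List.nodup_cons.mpr ⟨hu, h⟩)

theorem head?_insert {l m : List V} {a b u : V} :
    (l ++ a :: u :: b :: m).head? = (l ++ a :: b :: m).head? := by
  cases l <;> simp

theorem getLast?_insert {l m : List V} {a b u : V} :
    (l ++ a :: u :: b :: m).getLast? = (l ++ a :: b :: m).getLast? := by
  simp [List.getLast?_append]

theorem IsCycleOn.insert {A : V → V → Prop} {l m : List V} {a b u : V}
    (h : IsCycleOn A (l ++ a :: b :: m)) (hau : A a u) (hub : A u b)
    (hu : u ∉ l ++ a :: b :: m) : IsCycleOn A (l ++ a :: u :: b :: m) := by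
  obtain ⟨h1, h2, h3, h4⟩ := h
  refine ⟨?_, nodup_insert h2 hu, isChain_insert h3 hau hub, ?_⟩
  · rw [perm_insert.length_eq, List.length_cons]; omega
  · rw [head?_insert, getLast?_insert]; exact h4

theorem exists_of_not_notInsertable {A : V → V → Prop} {u : V} {P : List V}
    (h : ¬ NotInsertable A u P) :
    ∃ l a b m, P = l ++ a :: b :: m ∧ A a u ∧ A u b := by
  unfold NotInsertable at h
  rw [List.isChain_iff_forall_rel_of_append_cons_cons] at h
  push Not at h
  obtain ⟨a, b, l, m, h1, h2⟩ := h
  exact ⟨l, a, b, m, h1, h2⟩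

/-- A path `P` inside `C` extends to a path with the same ends, still inside `C`, into which no
further vertex of `C` can be inserted. -/
theorem exists_saturated_path [Fintype V] {A : V → V → Prop} {P C : List V} (hnd : P.Nodup)
    (hch : P.IsChain A) (hPC : P ⊆ C) :
    ∃ P' : List V, P'.Nodup ∧ P'.IsChain A ∧ P'.head? = P.head? ∧ P'.getLast? = P.getLast? ∧
      P ⊆ P' ∧ P' ⊆ C ∧ ∀ u ∈ C, u ∉ P' → NotInsertable A u P' := by
  let S : Set ℕ := {k | ∃ P' : List V, P'.Nodup ∧ P'.IsChain A ∧ P'.head? = P.head? ∧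
    P'.getLast? = P.getLast? ∧ P ⊆ P' ∧ P' ⊆ C ∧ P'.length = k}
  have hS : S.Nonempty := ⟨_, P, hnd, hch, rfl, rfl, List.Subset.refl _, hPC, rfl⟩
  have hB : BddAbove S := ⟨Fintype.card V, by
    rintro k ⟨P', h, -, -, -, -, -, rfl⟩; exact h.length_le_card⟩
  obtain ⟨P', h1, h2, h3, h4, h5, h6, h7⟩ := Nat.sSup_mem hS hB
  refine ⟨P', h1, h2, h3, h4, h5, h6, fun u huC hu => ?_⟩
  by_contra hins
  obtain ⟨l, a, b, m, rfl, hau, hub⟩ := exists_of_not_notInsertable hins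
  have hmem : (l ++ a :: u :: b :: m).length ∈ S := by
    refine ⟨_, nodup_insert h1 hu, isChain_insert h2 hau hub, head?_insert.trans h3,
      getLast?_insert.trans h4, fun x hx => ?_, fun x hx => ?_, rfl⟩
    · exact perm_insert.mem_iff.mpr (List.mem_cons_of_mem _ (h5 hx))
    · rcases List.mem_cons.mp (perm_insert.mem_iff.mp hx) with rfl | hx
      · exact huC
      · exact h6 hx
  have := le_csSup hB hmem
  rw [← h7, perm_insert.length_eq, List.length_cons] at this
  omega

/-! ### Detours around a maximal cycle -/

/-- A cycle whose set of vertices other than `z₀` is maximal. -/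
def IsMaximalCycle (A : V → V → Prop) (z₀ : V) (l : List V) : Prop :=
  IsCycleOn A l ∧ ∀ l', IsCycleOn A l' → (∀ v ∈ l, v ≠ z₀ → v ∈ l') →
    ∀ v ∈ l', v ≠ z₀ → v ∈ l

theorem IsMaximalCycle.rotate {A : V → V → Prop} {z₀ : V} {l m : List V}
    (h : IsMaximalCycle A z₀ (l ++ m)) : IsMaximalCycle A z₀ (m ++ l) := by
  refine ⟨h.1.rotate, fun l' hl' h1 v hv hv0 => ?_⟩
  rw [List.mem_append, or_comm, ← List.mem_append]
  refine h.2 l' hl' (fun w hw => h1 w ?_) v hv hv0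
  rwa [List.mem_append, or_comm, ← List.mem_append]

/-- A path avoiding `C` that contains a vertex other than `z₀`. -/
structure IsDetour (A : V → V → Prop) (z₀ : V) (C Q : List V) : Prop where
  nodup : Q.Nodup
  chain : Q.IsChain A
  notMem : ∀ q ∈ Q, q ∉ C
  exists_ne : ∃ s ∈ Q, s ≠ z₀

theorem IsDetour.ne_nil {A : V → V → Prop} {z₀ : V} {C Q : List V} (h : IsDetour A z₀ C Q) :
    Q ≠ [] := by
  rintro rfl
  simpa using h.exists_ne

theorem IsDetour.congr {A : V → V → Prop} {z₀ : V} {C C' Q : List V} (h : IsDetour A z₀ C Q)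
    (hC : ∀ v, v ∈ C' → v ∈ C) : IsDetour A z₀ C' Q :=
  ⟨h.nodup, h.chain, fun q hq hq' => h.notMem q hq (hC q hq'), h.exists_ne⟩

theorem IsDetour.of_isInfix {A : V → V → Prop} {z₀ : V} {C Q Q' : List V} (h : IsDetour A z₀ C Q)
    (hQ : Q' <:+: Q) (hne : ∃ s ∈ Q', s ≠ z₀) : IsDetour A z₀ C Q' :=
  ⟨h.nodup.sublist hQ.sublist, by
    obtain ⟨s, t, rfl⟩ := hQ
    exact h.chain.left_of_append.right_of_append, fun q hq => h.notMem q (hQ.subset hq), hne⟩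

/-- `P ++ G` is a maximal cycle and `Q` is a detour leading from the last vertex of `P` to its
first vertex; `G` is the gap of the cycle which is bridged by `Q`. -/
structure IsGapBypass (A : V → V → Prop) (z₀ : V) (P G Q : List V) : Prop where
  cycle : IsMaximalCycle A z₀ (P ++ G)
  detour : IsDetour A z₀ (P ++ G) Q
  ne_nil : P ≠ []
  leave : Link A P Q
  enter : Link A Q P

/-- The gap of a bypass is shortest possible. -/
def IsShortestGap (A : V → V → Prop) (z₀ : V) (G : List V) : Prop :=
  ∀ P' G' Q', IsGapBypass A z₀ P' G' Q' → G.length ≤ G'.length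

section Shortest

variable {A : V → V → Prop} {z₀ : V} {P G Q : List V}

theorem IsGapBypass.not_link_gap (h : IsGapBypass A z₀ P G Q) (hmin : IsShortestGap A z₀ G)
    {g : V} (hg : g ∈ G) {Q' : List V} (hQ' : IsDetour A z₀ (P ++ G) Q') (hleave : Link A P Q') :
    ¬ Link A Q' [g] := by
  intro hg'
  obtain ⟨G₁, G₂, rfl⟩ := List.append_of_mem hg
  have hc := h.cycle
  rw [← List.append_assoc] at hc
  have := hmin (g :: G₂ ++ P) G₁ Q'
    { cycle := by simpa using hc.rotate
      detour := hQ'.congr fun v hv => by simp at hv ⊢; tauto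
      ne_nil := by simp
      leave := (link_append_left h.ne_nil).mpr hleave
      enter := hg' }
  simp at this

theorem IsGapBypass.not_gap_link (h : IsGapBypass A z₀ P G Q) (hmin : IsShortestGap A z₀ G)
    {g : V} (hg : g ∈ G) {Q' : List V} (hQ' : IsDetour A z₀ (P ++ G) Q') (henter : Link A Q' P) :
    ¬ Link A [g] Q' := by
  intro hg'
  obtain ⟨G₁, G₂, rfl⟩ := List.append_of_mem hg
  have := hmin (P ++ (G₁ ++ [g])) G₂ Q'
    { cycle := by simpa using h.cycle
      detour := hQ'.congr fun v hv => by simp at hv ⊢; tauto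
      ne_nil := by simp [h.ne_nil]
      leave := by
        rw [← List.append_assoc]
        exact (link_append_left (by simp)).mpr hg'
      enter := (link_append_right h.ne_nil).mpr henter }
  simp at this
  omega

/-- In a bypass, there is no path of length two through `r` from a gap vertex `u` to the detour
vertex `y`, except possibly through `z₀` lying behind `y` on the detour. -/
theorem IsGapBypass.not_gap_to_detour {Q₁ Q₂ : List V} {y r u : V}
    (h : IsGapBypass A z₀ P G (Q₁ ++ y :: Q₂)) (hmin : IsShortestGap A z₀ G) (hy : y ≠ z₀)
    (hu : u ∈ G) (hr : r ∉ P ++ G) (hry : r ≠ y) (hz : r = z₀ → z₀ ∉ Q₂) :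
    ¬ (A u r ∧ A r y) := by
  rintro ⟨hur, hry'⟩
  have henter : Link A (y :: Q₂) P := (link_append_left (by simp)).mp h.enter
  have hd : IsDetour A z₀ (P ++ G) (y :: Q₂) :=
    h.detour.of_isInfix (List.suffix_append _ _).isInfix ⟨y, by simp, hy⟩
  by_cases hrQ : r ∈ Q₂
  · obtain ⟨s, t, rfl⟩ := List.append_of_mem hrQ
    have hr0 : r ≠ z₀ := fun h0 => hz h0 (h0 ▸ hrQ)
    refine h.not_gap_link hmin hu (Q' := r :: t)
      (hd.of_isInfix (List.suffix_append (y :: s) _).isInfix ⟨r, by simp, hr0⟩)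
      ((link_append_left (l := y :: s) (by simp)).mp henter) ?_
    simpa [Link] using hur
  · refine h.not_gap_link hmin hu (Q' := r :: y :: Q₂) ⟨?_, ?_, ?_, y, by simp, hy⟩
      ((link_append_left (l := [r]) (by simp)).mpr henter) (by simpa [Link] using hur)
    · exact List.nodup_cons.mpr ⟨by simp [hry, hrQ], hd.nodup⟩
    · exact List.isChain_cons_cons.mpr ⟨hry', hd.chain⟩
    · intro q hq
      rcases List.mem_cons.mp hq with rfl | hq
      · exact hr
      · exact hd.notMem q hq

/-- In a bypass, there is no path of length two through `r` from the detour vertex `y` to a gap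
vertex `u`, except possibly through `z₀` opening the detour. -/
theorem IsGapBypass.not_detour_to_gap {Q₁ Q₂ : List V} {y r u : V}
    (h : IsGapBypass A z₀ P G (Q₁ ++ y :: Q₂)) (hmin : IsShortestGap A z₀ G) (hy : y ≠ z₀)
    (hu : u ∈ G) (hr : r ∉ P ++ G) (hry : r ≠ y) (hz : r = z₀ → Q₁.head? ≠ some z₀) :
    ¬ (A y r ∧ A r u) := by
  rintro ⟨hyr, hru⟩
  have hQ : Q₁ ++ y :: Q₂ = (Q₁ ++ [y]) ++ Q₂ := by simp
  have hleave : Link A P (Q₁ ++ [y]) := by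
    have := h.leave
    rw [hQ] at this
    exact (link_append_right (by simp)).mp this
  have hd : IsDetour A z₀ (P ++ G) (Q₁ ++ [y]) :=
    h.detour.of_isInfix (hQ ▸ (List.prefix_append _ _).isInfix) ⟨y, by simp, hy⟩
  by_cases hrQ : r ∈ Q₁
  · obtain ⟨s, t, rfl⟩ := List.append_of_mem hrQ
    have hs : s ++ r :: t ++ [y] = (s ++ [r]) ++ (t ++ [y]) := by simp
    rw [hs] at hleave hd
    refine h.not_link_gap hmin hu (Q' := s ++ [r])
      (hd.of_isInfix (List.prefix_append _ _).isInfix ?_)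
      ((link_append_right (by simp)).mp hleave) (by simpa [Link] using hru)
    by_cases hr0 : r = z₀
    · cases s with
      | nil => simp [hr0] at hz
      | cons q s =>
        refine ⟨q, by simp, ?_⟩
        rintro rfl
        have := hd.nodup
        simp [hr0] at this
    · exact ⟨r, by simp, hr0⟩
  · refine h.not_link_gap hmin hu (Q' := (Q₁ ++ [y]) ++ [r]) ⟨?_, ?_, ?_, y, by simp, hy⟩
      ((link_append_right (by simp)).mpr hleave) (by simpa [Link] using hru)
    · rw [List.nodup_append_comm]
      exact List.nodup_cons.mpr ⟨by simp [hry, hrQ], hd.nodup⟩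
    · rw [isChain_append_iff_link]
      exact ⟨hd.chain, by simp, by simpa [Link] using hyr⟩
    · intro q hq
      rcases List.mem_append.mp hq with hq | hq
      · exact hd.notMem q hq
      · rw [List.mem_singleton] at hq
        exact hq ▸ hr

theorem IsGapBypass.not_dAdj_gap {Q₁ Q₂ : List V} {y u : V}
    (h : IsGapBypass A z₀ P G (Q₁ ++ y :: Q₂)) (hmin : IsShortestGap A z₀ G) (hy : y ≠ z₀)
    (hu : u ∈ G) : ¬ DAdj A y u := by
  have hQ : Q₁ ++ y :: Q₂ = (Q₁ ++ [y]) ++ Q₂ := by simp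
  rintro (hyu | huy)
  · refine h.not_link_gap hmin hu (Q' := Q₁ ++ [y])
      (h.detour.of_isInfix (hQ ▸ (List.prefix_append _ _).isInfix) ⟨y, by simp, hy⟩) ?_
      (by simpa [Link] using hyu)
    have := h.leave
    rw [hQ] at this
    exact (link_append_right (by simp)).mp this
  · exact h.not_gap_link hmin hu (Q' := y :: Q₂)
      (h.detour.of_isInfix (List.suffix_append _ _).isInfix ⟨y, by simp, hy⟩)
      ((link_append_left (by simp)).mp h.enter) (by simpa [Link] using huy)

theorem IsGapBypass.notInsertable (h : IsGapBypass A z₀ P G Q) {y : V} (hy : y ≠ z₀)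
    (hyC : y ∉ P ++ G) : NotInsertable A y P := by
  by_contra hins
  obtain ⟨l, a, b, m, rfl, hay, hyb⟩ := exists_of_not_notInsertable hins
  have hc : IsMaximalCycle A z₀ (l ++ a :: b :: (m ++ G)) := by simpa using h.cycle
  have hyC' : y ∉ l ++ a :: b :: (m ++ G) := by simpa using hyC
  refine hyC' (hc.2 _ (hc.1.insert hay hyb hyC') (fun v hv _ => ?_) y (by simp) hy)
  exact perm_insert.mem_iff.mpr (List.mem_cons_of_mem _ hv)

variable [Fintype V]

/-- A gap vertex other than `z₀` remains after inserting gap vertices into `P`. -/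
theorem IsGapBypass.exists_gap_vertex (h : IsGapBypass A z₀ P G Q) :
    ∃ P' : List V, ∃ u ∈ G, u ≠ z₀ ∧ P'.Nodup ∧ P ⊆ P' ∧ P' ⊆ P ++ G ∧ u ∉ P' ∧
      NotInsertable A u P' := by
  have hnd : (P ++ G).Nodup := h.cycle.1.2.1
  have hch : (P ++ G).IsChain A := h.cycle.1.2.2.1
  obtain ⟨P', h1, h2, h3, h4, h5, h6, h7⟩ := exists_saturated_path
    (List.nodup_append.mp hnd).1 (isChain_append_iff_link.mp hch).1
    (List.subset_append_left P G)
  by_cases hall : ∀ u ∈ G, u ≠ z₀ → u ∈ P'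
  · exfalso
    have hP' : P' ≠ [] := fun h0 => h.ne_nil (List.subset_nil.mp (h0 ▸ h5))
    have hcyc : IsCycleOn A (P' ++ Q) := by
      rw [isCycleOn_append hP' h.detour.ne_nil]
      refine ⟨?_, h2, h.detour.chain, ?_, ?_⟩
      · exact List.Nodup.append h1 h.detour.nodup fun v hv hvQ => h.detour.notMem v hvQ (h6 hv)
      · unfold Link; rw [h4]; exact h.leave
      · unfold Link; rw [h3]; exact h.enter
    obtain ⟨s, hs, hs0⟩ := h.detour.exists_ne
    refine h.detour.notMem s hs (h.cycle.2 _ hcyc (fun v hv hv0 => ?_) s (by simp [hs]) hs0)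
    rcases List.mem_append.mp hv with hv | hv
    · exact List.mem_append_left _ (h5 hv)
    · exact List.mem_append_left _ (hall v hv hv0)
  · push Not at hall
    obtain ⟨u, hu, hu0, huP⟩ := hall
    exact ⟨P', u, hu, hu0, h1, h5, h6, huP, h7 u (List.mem_append_right _ hu) huP⟩

theorem IsGapBypass.exists_deg_add_deg_le_of_split (hA : ∀ v, ¬ A v v) {Q₁ Q₂ : List V} {y : V}
    (h : IsGapBypass A z₀ P G (Q₁ ++ y :: Q₂)) (hmin : IsShortestGap A z₀ G) (hy : y ≠ z₀)
    (hz : z₀ ∉ Q₂ ∧ Q₁.head? ≠ some z₀ ∨ z₀ ∉ Q₂ ∧ ¬ Link A P [y] ∨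
      z₀ ∉ Q₁ ∧ ¬ Link A [y] P) :
    ∃ u y, u ≠ z₀ ∧ y ≠ z₀ ∧ u ≠ y ∧ ¬ DAdj A u y ∧
      deg A u + deg A y + 2 ≤ 2 * Fintype.card V := by
  obtain ⟨P', u, hu, hu0, h1, h2, h3, h4, h5⟩ := h.exists_gap_vertex
  have hyC : y ∉ P ++ G := h.detour.notMem y (by simp)
  have hyG : ∀ g ∈ G, ¬ DAdj A y g := fun g hg => h.not_dAdj_gap hmin hy hg
  refine ⟨u, y, hu0, hy, ?_, fun h => hyG u hu h.symm, ?_⟩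
  · rintro rfl
    exact hyC (List.mem_append_right _ hu)
  refine deg_add_deg_le hA (z₀ := z₀) h.cycle.1.2.1 h.ne_nil hu hyC hyG h1 h2 h3 h4 h5
    (h.notInsertable hy hyC) fun r hr hry => ?_
  have c₁ := h.not_gap_to_detour hmin hy hu hr hry
  have c₂ := h.not_detour_to_gap hmin hy hu hr hry
  have c₃ : z₀ ∉ Q₁ → Q₁.head? ≠ some z₀ := fun hz h0 => hz (List.mem_of_head? h0)
  tauto

theorem IsGapBypass.exists_deg_add_deg_le (hA : ∀ v, ¬ A v v)
    (h : IsGapBypass A z₀ P G Q) (hmin : IsShortestGap A z₀ G) :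
    ∃ u y, u ≠ z₀ ∧ y ≠ z₀ ∧ u ≠ y ∧ ¬ DAdj A u y ∧
      deg A u + deg A y + 2 ≤ 2 * Fintype.card V := by
  by_cases hzQ : z₀ ∈ Q
  · obtain ⟨Q₁, Q₂, rfl⟩ := List.append_of_mem hzQ
    have hnd := h.detour.nodup
    cases Q₂ with
    | cons y Q₂ =>
      have hQ : Q₁ ++ z₀ :: y :: Q₂ = (Q₁ ++ [z₀]) ++ y :: Q₂ := by simp
      have hnd' : z₀ ∉ y :: Q₂ :=
        (List.nodup_cons.mp (hnd.sublist (List.sublist_append_right _ _))).1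
      have hy : y ≠ z₀ := by rintro rfl; simp at hnd'
      have hz2 : z₀ ∉ Q₂ := fun h0 => hnd' (List.mem_cons_of_mem _ h0)
      by_cases hlink : Q₁ = [] ∧ Link A P [y]
      · have h' : IsGapBypass A z₀ P G ([] ++ y :: Q₂) :=
          ⟨h.cycle, h.detour.of_isInfix (hQ ▸ (List.suffix_append _ _).isInfix) ⟨y, by simp, hy⟩,
            h.ne_nil, hlink.2, (link_append_left (by simp)).mp (hQ ▸ h.enter)⟩
        exact h'.exists_deg_add_deg_le_of_split hA hmin hy (Or.inl ⟨hz2, by simp⟩)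
      · rw [hQ] at h
        refine h.exists_deg_add_deg_le_of_split hA hmin hy ?_
        cases Q₁ with
        | nil => exact Or.inr (Or.inl ⟨hz2, fun h0 => hlink ⟨rfl, h0⟩⟩)
        | cons q Q₁ =>
          refine Or.inl ⟨hz2, ?_⟩
          intro h0
          simp at h0 hnd
          exact hnd.1.2.1 h0
    | nil =>
      rcases List.eq_nil_or_concat Q₁ with rfl | ⟨Q₁, y, rfl⟩
      · simpa using h.detour.exists_ne
      have hnd' : z₀ ∉ Q₁ ++ [y] := by
        rw [List.concat_eq_append, List.nodup_append_comm] at hnd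
        exact (List.nodup_cons.mp hnd).1
      have hy : y ≠ z₀ := by rintro rfl; simp at hnd'
      have hz1 : z₀ ∉ Q₁ := fun h0 => hnd' (List.mem_append_left _ h0)
      rw [List.concat_eq_append] at h
      by_cases hlink : Link A [y] P
      · have h' : IsGapBypass A z₀ P G (Q₁ ++ y :: []) :=
          ⟨h.cycle, h.detour.of_isInfix (List.prefix_append _ _).isInfix ⟨y, by simp, hy⟩,
            h.ne_nil, (link_append_right (by simp)).mp h.leave,
            (link_append_left (by simp)).mpr hlink⟩
        exact h'.exists_deg_add_deg_le_of_split hA hmin hy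
          (Or.inl ⟨by simp, fun h0 => hz1 (List.mem_of_head? h0)⟩)
      · rw [List.append_assoc, List.singleton_append] at h
        exact h.exists_deg_add_deg_le_of_split hA hmin hy (Or.inr (Or.inr ⟨hz1, hlink⟩))
  · obtain ⟨y, hyQ, hy⟩ := h.detour.exists_ne
    obtain ⟨Q₁, Q₂, rfl⟩ := List.append_of_mem hyQ
    exact h.exists_deg_add_deg_le_of_split hA hmin hy
      (Or.inl ⟨fun h0 => hzQ (by simp [h0]), fun h0 => hzQ (by simp [List.mem_of_head? h0])⟩)

end Shortest

/-! ### Existence of cycles and bypasses -/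

theorem exists_first_mem {C l : List V} (h : ∃ c ∈ l, c ∈ C) :
    ∃ Q c R, l = Q ++ c :: R ∧ c ∈ C ∧ ∀ q ∈ Q, q ∉ C := by
  induction l with
  | nil => simp at h
  | cons x l ih =>
    by_cases hx : x ∈ C
    · exact ⟨[], x, l, rfl, hx, by simp⟩
    · obtain ⟨Q, c, R, rfl, hc, hQ⟩ := ih (by simpa [hx] using h)
      exact ⟨x :: Q, c, R, rfl, hc, by simpa [hx] using hQ⟩

theorem exists_last_mem {C l : List V} (h : ∃ c ∈ l, c ∈ C) :
    ∃ R c Q, l = R ++ c :: Q ∧ c ∈ C ∧ ∀ q ∈ Q, q ∉ C := by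
  obtain ⟨Q, c, R, hl, hc, hQ⟩ := exists_first_mem (l := l.reverse) (C := C) (by simpa using h)
  refine ⟨R.reverse, c, Q.reverse, ?_, hc, by simpa using hQ⟩
  rw [← List.reverse_reverse l, hl]
  simp

theorem IsMaximalCycle.exists_isGapBypass {A : V → V → Prop} {z₀ : V} {l Q : List V}
    (hl : IsMaximalCycle A z₀ l) (hQ : IsDetour A z₀ l Q) {a b : V} (ha : a ∈ l) (hb : b ∈ l)
    (hleave : Link A [a] Q) (henter : Link A Q [b]) : ∃ P G, IsGapBypass A z₀ P G Q := by
  obtain ⟨s, t, rfl⟩ := List.append_of_mem hb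
  have hrot := hl.rotate
  have ha' : a ∈ b :: t ++ s := by simp at ha ⊢; tauto
  obtain ⟨M, G, hM⟩ := List.append_of_mem ha'
  have hPG : b :: t ++ s = (M ++ [a]) ++ G := by rw [hM]; simp
  refine ⟨M ++ [a], G, hPG ▸ hrot, hPG ▸ hQ.congr fun v hv => ?_, by simp,
    (link_append_left (by simp)).mpr hleave, ?_⟩
  · simp at hv ⊢; tauto
  · cases M with
    | nil => simp at hM; rw [← hM.1]; exact henter
    | cons x M => simp at hM; rw [← hM.1]; exact henter

theorem not_dAdj_of_forall_not_isGapBypass {A : V → V → Prop} (hconn : StronglyConnected A)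
    {z₀ : V} {l : List V} (hl : IsMaximalCycle A z₀ l)
    (hno : ∀ P G Q, ¬ IsGapBypass A z₀ P G Q) {c z : V} (hc : c ∈ l) (hz : z ∉ l)
    (hz0 : z ≠ z₀) : ¬ DAdj A c z := by
  have hcz : c ≠ z := fun h => hz (h ▸ hc)
  rintro (h | h)
  · obtain ⟨p, ⟨-, hnd, hch⟩, hhead, hlast⟩ := hconn z c hcz.symm
    obtain ⟨Q, c', R, rfl, hc', hQ⟩ :=
      exists_first_mem (C := l) ⟨c, List.mem_of_getLast? hlast, hc⟩
    have hch' := isChain_append_iff_link.mp hch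
    cases Q with
    | nil => simp at hhead; exact hz (hhead ▸ hc')
    | cons q Q =>
      obtain rfl : q = z := by simpa using hhead
      obtain ⟨P, G, hPG⟩ := hl.exists_isGapBypass (Q := q :: Q)
        ⟨hnd.sublist (List.sublist_append_left _ _), hch'.1, hQ, q, by simp, hz0⟩ hc hc'
        (by simpa [Link] using h) hch'.2.2
      exact hno _ _ _ hPG
  · obtain ⟨p, ⟨-, hnd, hch⟩, hhead, hlast⟩ := hconn c z hcz
    obtain ⟨R, c', Q, rfl, hc', hQ⟩ :=
      exists_last_mem (C := l) ⟨c, List.mem_of_head? hhead, hc⟩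
    rw [List.append_cons] at hnd hch hlast
    have hch' := isChain_append_iff_link.mp hch
    rcases List.eq_nil_or_concat Q with rfl | ⟨Q, q, rfl⟩
    · simp at hlast; exact hz (hlast ▸ hc')
    · rw [List.concat_eq_append] at *
      obtain rfl : q = z := by simpa [List.getLast?_append, List.getLast?_cons] using hlast
      obtain ⟨P, G, hPG⟩ := hl.exists_isGapBypass (Q := Q ++ [q])
        ⟨hnd.sublist (List.sublist_append_right _ _), hch'.2.1, hQ, q, by simp, hz0⟩ hc' hc
        ((link_append_left (by simp)).mp hch'.2.2) (by simpa [Link] using h)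
      exact hno _ _ _ hPG

theorem StronglyConnected.exists_isCycleOn {A : V → V → Prop} (hA : ∀ v, ¬ A v v)
    (hconn : StronglyConnected A) [Nontrivial V] : ∃ l, IsCycleOn A l := by
  obtain ⟨x, y, hxy⟩ := exists_pair_ne V
  obtain ⟨p, ⟨-, -, hch⟩, hhead, hlast⟩ := hconn x y hxy
  obtain ⟨w, hxw⟩ : ∃ w, A x w := by
    match p, hch, hhead, hlast with
    | [a], _, hhead, hlast => simp at hhead hlast; exact absurd (hhead.symm.trans hlast) hxy
    | a :: w :: p, hch, hhead, _ =>
      obtain rfl : a = x := by simpa using hhead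
      exact ⟨w, (List.isChain_cons_cons.mp hch).1⟩
  have hwx : w ≠ x := fun h => hA x (h ▸ hxw)
  obtain ⟨q, ⟨-, hnd, hch⟩, hhead, hlast⟩ := hconn w x hwx
  refine ⟨q, ?_, hnd, hch, by simpa [hhead, hlast] using hxw⟩
  match q, hhead, hlast with
  | [a], hhead, hlast => simp at hhead hlast; exact absurd (hhead.symm.trans hlast) hwx
  | a :: b :: q, _, _ => simp

theorem IsCycleOn.exists_isMaximalCycle [Finite V] {A : V → V → Prop} (z₀ : V) {l₀ : List V}
    (h₀ : IsCycleOn A l₀) : ∃ l, IsMaximalCycle A z₀ l := by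
  obtain ⟨T, ⟨l, hl, rfl⟩, hmax⟩ :=
    (Set.toFinite {T : Set V | ∃ l, IsCycleOn A l ∧ {v | v ∈ l ∧ v ≠ z₀} = T}).exists_maximal
      ⟨_, l₀, h₀, rfl⟩
  exact ⟨l, hl, fun l' hl' h v hv hv0 =>
    (hmax ⟨l', hl', rfl⟩ (fun w hw => ⟨h w hw.1 hw.2, hw.2⟩) ⟨hv, hv0⟩).1⟩

theorem exists_isShortestGap {A : V → V → Prop} {z₀ : V} {P G Q : List V}
    (h : IsGapBypass A z₀ P G Q) :
    ∃ P G Q, IsGapBypass A z₀ P G Q ∧ IsShortestGap A z₀ G := by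
  classical
  have hex : ∃ k, ∃ P G Q, IsGapBypass A z₀ P G Q ∧ G.length = k := ⟨_, P, G, Q, h, rfl⟩
  obtain ⟨P', G', Q', h', hk⟩ := Nat.find_spec hex
  exact ⟨P', G', Q', h', fun P₁ G₁ Q₁ h₁ => hk ▸ Nat.find_min' hex ⟨P₁, G₁, Q₁, h₁, rfl⟩⟩

/-- Corollary 2. -/
theorem cycle_through_all_but_z0 [Fintype V] (A : V → V → Prop)
    (hloops : ∀ v, ¬ A v v)
    (hn : 3 ≤ Fintype.card V) (hconn : StronglyConnected A)
    (z₀ : V)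
    (hdeg : ∀ x y : V, x ≠ z₀ → y ≠ z₀ → x ≠ y → ¬ DAdj A x y →
      deg A x + deg A y ≥ 2 * Fintype.card V - 1) :
    ∃ l : List V, IsCycleOn A l ∧ ∀ v : V, v ≠ z₀ → v ∈ l := by
  have : Nontrivial V := Fintype.one_lt_card_iff_nontrivial.mp (by omega)
  obtain ⟨l₀, h₀⟩ := hconn.exists_isCycleOn hloops
  obtain ⟨l, hl⟩ := h₀.exists_isMaximalCycle z₀
  refine ⟨l, hl.1, ?_⟩
  by_contra hmiss
  push Not at hmiss
  obtain ⟨y, hy0, hyl⟩ := hmiss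
  obtain ⟨u, y, hu0, hy0, huy, hadj, hle⟩ : ∃ u y, u ≠ z₀ ∧ y ≠ z₀ ∧ u ≠ y ∧ ¬ DAdj A u y ∧
      deg A u + deg A y + 2 ≤ 2 * Fintype.card V := by
    by_cases hno : ∀ P G Q, ¬ IsGapBypass A z₀ P G Q
    · obtain ⟨u, hul, hu0⟩ : ∃ u ∈ l, u ≠ z₀ := by
        obtain ⟨hlen, hnd, -⟩ := hl.1
        match l, hlen, hnd with
        | a :: b :: l, _, hnd =>
          by_cases ha : a = z₀
          · refine ⟨b, by simp, ?_⟩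
            rintro rfl
            simp [ha] at hnd
          · exact ⟨a, by simp, ha⟩
      have key : ∀ {c z}, c ∈ l → z ∉ l → z ≠ z₀ → ¬ DAdj A c z := fun hc hz hz0 =>
        not_dAdj_of_forall_not_isGapBypass hconn hl hno hc hz hz0
      refine ⟨u, y, hu0, hy0, fun h => hyl (h ▸ hul), key hul hyl hy0,
        deg_add_deg_le_of_common (z₀ := z₀) hloops (fun h => hyl (h ▸ hul)) (key hul hyl hy0) fun z hz0 => ?_⟩
      by_cases hz : z ∈ l
      · exact Or.inr fun h => key hz hyl hy0 h.symm
      · exact Or.inl (key hul hz hz0)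
    · push Not at hno
      obtain ⟨P, G, Q, h⟩ := hno
      obtain ⟨P, G, Q, h, hmin⟩ := exists_isShortestGap h
      exact h.exists_deg_add_deg_le hloops hmin
  have := hdeg u y hu0 hy0 huy hadj
  omega
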